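/- Let γ ∈ (0, 1) and let φ : ℝ → ℝ be a margin-based loss with φ(α) ≥ 0 for all α. Assume φ is bounded, nonincreasing, quasiconcave even, and φ(−1) > φ(1), and set B := φ(1) + φ(−1). Then φ is (φ_γ, [−1, 1])-calibrated if and only if φ(γ) + φ(−γ) > B. -/

import Mathlib

/-- Class-conditional risk of a margin-based loss `φ`:
`C_φ(α, η) = η φ(α) + (1 - η) φ(-α)`. -/
noncomputable def ccr (φ : ℝ → ℝ) (α η : ℝ) : ℝ := η * φ α + (1 - η) * φ (-α)

/-- Minimal class-conditional risk over a set `A` of achievable prediction values. -/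
noncomputable def ccrStar (φ : ℝ → ℝ) (A : Set ℝ) (η : ℝ) : ℝ :=
  sInf ((fun α => ccr φ α η) '' A)

/-- Excess class-conditional risk. -/
noncomputable def ccrExcess (φ : ℝ → ℝ) (A : Set ℝ) (α η : ℝ) : ℝ :=
  ccr φ α η - ccrStar φ A η

/-- `φ` is `(ψ, A)`-calibrated. -/
def Calibrated (φ ψ : ℝ → ℝ) (A : Set ℝ) : Prop :=
  ∀ ε > (0:ℝ), ∃ δ > (0:ℝ), ∀ η ∈ Set.Icc (0:ℝ) 1, ∀ α ∈ A,
    ccr φ α η < ccrStar φ A η + δ → ccr ψ α η < ccrStar ψ A η + ε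

/-- The `γ`-robust 0-1 loss `φ_γ(α) = 1{α ≤ γ}` (the 0-1 loss is the case `γ = 0`). -/
noncomputable def robustLoss (γ : ℝ) (α : ℝ) : ℝ := if α ≤ γ then 1 else 0

/-- Quasiconcavity of a real function on ℝ. -/
def QuasiconcaveFn (h : ℝ → ℝ) : Prop :=
  ∀ α₁ α₂ l : ℝ, 0 ≤ l → l ≤ 1 → min (h α₁) (h α₂) ≤ h (l * α₁ + (1 - l) * α₂)

/-- `φ` is quasiconcave even if its even part `α ↦ φ(α) + φ(-α)` is quasiconcave. -/
def QuasiconcaveEven (φ : ℝ → ℝ) : Prop := QuasiconcaveFn (fun α => φ α + φ (-α))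

/-- The even part of a quasiconcave even loss decreases with the absolute value of the margin. -/
theorem QuasiconcaveEven.add_neg_le_of_abs_le {φ : ℝ → ℝ} (h : QuasiconcaveEven φ) {a b : ℝ}
    (hba : |b| ≤ |a|) : φ a + φ (-a) ≤ φ b + φ (-b) := by
  rcases eq_or_ne a 0 with rfl | ha
  · obtain rfl : b = 0 := by simpa using hba
    exact le_rfl
  · have hratio : |b / a| ≤ 1 := by
      rw [abs_div]
      exact div_le_one_of_le₀ hba (abs_nonneg a)
    obtain ⟨hl, hu⟩ := abs_le.mp hratio
    have key := h a (-a) ((b / a + 1) / 2) (by linarith) (by linarith)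
    have hcomb : (b / a + 1) / 2 * a + (1 - (b / a + 1) / 2) * -a = b := by
      field_simp
      ring
    rw [hcomb] at key
    simpa [add_comm (φ (-a))] using key

theorem ccrStar_le_ccr {φ : ℝ → ℝ} (hφ : ∀ α, 0 ≤ φ α) {A : Set ℝ} {α η : ℝ} (hα : α ∈ A)
    (hη : η ∈ Set.Icc (0 : ℝ) 1) : ccrStar φ A η ≤ ccr φ α η := by
  refine csInf_le ⟨0, ?_⟩ (Set.mem_image_of_mem _ hα)
  rintro _ ⟨β, -, rfl⟩
  exact add_nonneg (mul_nonneg hη.1 (hφ _)) (mul_nonneg (sub_nonneg.mpr hη.2) (hφ _))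

theorem le_ccrStar {φ : ℝ → ℝ} {A : Set ℝ} {η c : ℝ} (hA : A.Nonempty)
    (h : ∀ α ∈ A, c ≤ ccr φ α η) : c ≤ ccrStar φ A η := by
  refine le_csInf (hA.image _) ?_
  rintro _ ⟨α, hα, rfl⟩
  exact h α hα

theorem robustLoss_nonneg (γ α : ℝ) : 0 ≤ robustLoss γ α := by
  unfold robustLoss
  split_ifs <;> norm_num

theorem ccr_robustLoss_of_gt {γ α : ℝ} (hγ : 0 < γ) (hα : γ < α) (η : ℝ) :
    ccr (robustLoss γ) α η = 1 - η := by
  simp [ccr, robustLoss, hα.not_ge, show -α ≤ γ by linarith]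

theorem ccr_robustLoss_of_lt_neg {γ α : ℝ} (hγ : 0 < γ) (hα : α < -γ) (η : ℝ) :
    ccr (robustLoss γ) α η = η := by
  simp [ccr, robustLoss, show α ≤ γ by linarith, show ¬ -α ≤ γ by linarith]

theorem ccr_robustLoss_of_abs_le {γ α : ℝ} (hα : |α| ≤ γ) (η : ℝ) :
    ccr (robustLoss γ) α η = 1 := by
  simp [ccr, robustLoss, (abs_le.mp hα).2, show -α ≤ γ by linarith [(abs_le.mp hα).1]]

theorem min_le_ccr_robustLoss {γ : ℝ} (hγ : 0 < γ) (α : ℝ) {η : ℝ}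
    (hη : η ∈ Set.Icc (0 : ℝ) 1) : min η (1 - η) ≤ ccr (robustLoss γ) α η := by
  rcases lt_or_ge γ α with h | h
  · rw [ccr_robustLoss_of_gt hγ h]
    exact min_le_right _ _
  rcases lt_or_ge α (-γ) with h' | h'
  · rw [ccr_robustLoss_of_lt_neg hγ h']
    exact min_le_left _ _
  · rw [ccr_robustLoss_of_abs_le (abs_le.mpr ⟨h', h⟩)]
    exact (min_le_left _ _).trans hη.2

/-- Theorem 2, part 2: a bounded, nonincreasing, quasiconcave even loss with
`φ(-1) > φ(1)` is `(φ_γ, [-1,1])`-calibrated iff `φ(γ) + φ(-γ) > φ(1) + φ(-1)`. -/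
theorem qcc_even_calibrated_robust_iff
    (γ : ℝ) (hγ : γ ∈ Set.Ioo (0:ℝ) 1)
    (φ : ℝ → ℝ) (hφ : ∀ α, 0 ≤ φ α)
    (hbdd : ∃ M : ℝ, ∀ α, φ α ≤ M)
    (hmono : ∀ α₁ α₂ : ℝ, α₁ ≤ α₂ → φ α₂ ≤ φ α₁)
    (hqcc : QuasiconcaveEven φ)
    (hgap : φ 1 < φ (-1)) :
    Calibrated φ (robustLoss γ) (Set.Icc (-1:ℝ) 1) ↔
      φ 1 + φ (-1) < φ γ + φ (-γ) := by
  obtain ⟨hγ0, hγ1⟩ := hγ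
  have hne : (Set.Icc (-1 : ℝ) 1).Nonempty := ⟨0, by norm_num⟩
  have hone : (1 : ℝ) ∈ Set.Icc (-1 : ℝ) 1 := by norm_num
  have hnegone : (-1 : ℝ) ∈ Set.Icc (-1 : ℝ) 1 := by norm_num
  have hmin : ∀ α ∈ Set.Icc (-1 : ℝ) 1, φ 1 + φ (-1) ≤ φ α + φ (-α) := fun α hα =>
    hqcc.add_neg_le_of_abs_le (by simpa using abs_le.mpr hα)
  constructor
  · intro hcal
    by_contra! hle
    obtain ⟨δ, hδ, hcal⟩ := hcal (1 / 2) (by norm_num)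
    have hhalf : (1 / 2 : ℝ) ∈ Set.Icc (0 : ℝ) 1 := by norm_num
    have hstar : ccr φ γ (1 / 2) ≤ ccrStar φ (Set.Icc (-1) 1) (1 / 2) := by
      refine le_ccrStar hne fun α hα => ?_
      unfold ccr
      linarith [hmin α hα]
    have hrisk := hcal (1 / 2) hhalf γ ⟨by linarith, hγ1.le⟩ (by linarith)
    have hrobust := ccrStar_le_ccr (robustLoss_nonneg γ) hone hhalf
    rw [ccr_robustLoss_of_gt hγ0 hγ1] at hrobust
    rw [ccr_robustLoss_of_abs_le (abs_of_pos hγ0).le] at hrisk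
    linarith
  · intro hlt ε hε
    refine ⟨min ((φ γ + φ (-γ) - (φ 1 + φ (-1))) / 2) (ε * (φ (-1) - φ 1) / 2),
      lt_min (by linarith) (by nlinarith), fun η hη α hα hrisk => ?_⟩
    have hfst := min_le_left ((φ γ + φ (-γ) - (φ 1 + φ (-1))) / 2) (ε * (φ (-1) - φ 1) / 2)
    have hsnd := min_le_right ((φ γ + φ (-γ) - (φ 1 + φ (-1))) / 2) (ε * (φ (-1) - φ 1) / 2)
    have hpos := ccrStar_le_ccr hφ hone hη
    have hneg := ccrStar_le_ccr hφ hnegone hη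
    have hrobust : min η (1 - η) ≤ ccrStar (robustLoss γ) (Set.Icc (-1) 1) η :=
      le_ccrStar hne fun β _ => min_le_ccr_robustLoss hγ0 β hη
    have hS := hmin α hα
    simp only [ccr, neg_neg] at hpos hneg
    rw [ccr] at hrisk
    rcases lt_or_ge γ α with h | h
    · rw [ccr_robustLoss_of_gt hγ0 h]
      by_contra! hbad
      have hη' : ε ≤ 1 - 2 * η := by
        rcases min_choice η (1 - η) with hm | hm <;> rw [hm] at hrobust <;> linarith
      have hD := hmono (-α) α (by linarith)
      nlinarith [mul_nonneg (show 0 ≤ 1 - 2 * η by linarith) (sub_nonneg.mpr hD),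
        mul_le_mul_of_nonneg_right hη' (sub_pos.mpr hgap).le]
    rcases lt_or_ge α (-γ) with h' | h'
    · rw [ccr_robustLoss_of_lt_neg hγ0 h']
      by_contra! hbad
      have hη' : ε ≤ 2 * η - 1 := by
        rcases min_choice η (1 - η) with hm | hm <;> rw [hm] at hrobust <;> linarith
      have hD := hmono α (-α) (by linarith)
      nlinarith [mul_nonneg (show 0 ≤ 2 * η - 1 by linarith) (sub_nonneg.mpr hD),
        mul_le_mul_of_nonneg_right hη' (sub_pos.mpr hgap).le]
    · exfalso
      have hγα := hqcc.add_neg_le_of_abs_le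
        (show |α| ≤ |γ| by rw [abs_of_pos hγ0]; exact abs_le.mpr ⟨h', h⟩)
      have h₁ := hmono α 1 hα.2
      have h₂ := hmono (-1) (-α) (by linarith [hα.2])
      have h₃ := hmono (-1) α hα.1
      have h₄ := hmono (-α) 1 (by linarith [hα.1])
      rcases le_total (1 / 2) η with hη' | hη'
      · nlinarith [mul_nonneg (show 0 ≤ 2 * η - 1 by linarith)
          (show 0 ≤ (φ α - φ 1) + (φ (-1) - φ (-α)) by linarith)]
      · nlinarith [mul_nonneg (show 0 ≤ 1 - 2 * η by linarith)
          (show 0 ≤ (φ (-1) - φ α) + (φ (-α) - φ 1) by linarith)]
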